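/- Every integral lattice L with Λ2 ⊆ L ⊆ V is isometric (via a linear isometry of ℝ^3) to one of the two lattices Λ2 and Λ2 + ℤ·(ε1−ε2)/√2. -/

import Mathlib

noncomputable section

open scoped RealInnerProductSpace

/-- `ℝ^n` with the standard inner product. -/
abbrev E (n : ℕ) := EuclideanSpace ℝ (Fin n)

/-- The standard basis vector `ε i`. -/
def εv {n : ℕ} (i : Fin n) : E n := EuclideanSpace.single i 1

/-- The vector of `ℝ^n` with the given coordinates. -/
def vec {n : ℕ} (x : Fin n → ℝ) : E n := (WithLp.equiv 2 (Fin n → ℝ)).symm x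

/-- The vector of `ℝ^n` with the given integer coordinates. -/
def intVec {n : ℕ} (x : Fin n → ℤ) : E n := (WithLp.equiv 2 (Fin n → ℝ)).symm fun i => (x i : ℝ)

/-- A lattice is integral if all pairwise inner products of its elements are integers. -/
def LatticeIsIntegral {n : ℕ} (L : Submodule ℤ (E n)) : Prop :=
  ∀ x ∈ L, ∀ y ∈ L, ∃ k : ℤ, ⟪x, y⟫ = (k : ℝ)

/-- Two lattices are isometric if a linear isometry of the ambient space carries
one onto the other. -/
def IsometricLattices {n : ℕ} (L M : Submodule ℤ (E n)) : Prop :=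
  ∃ g : E n ≃ₗᵢ[ℝ] E n, g '' (L : Set (E n)) = (M : Set (E n))

/-- The laminated lattice `Λ₂ = {√2·x : x ∈ ℤ³, x 0 + x 1 + x 2 = 0} ≅ √2·A₂`. -/
def Λ2 : Submodule ℤ (E 3) :=
  Submodule.span ℤ
    {v : E 3 | ∃ x : Fin 3 → ℤ, x 0 + x 1 + x 2 = 0 ∧ v = Real.sqrt 2 • intVec x}

/-- `(ε1 - ε2)/√2`. -/
def u12 : E 3 := (Real.sqrt 2)⁻¹ • (εv 0 - εv 1)

/-!
Write `u i j = (ε i - ε j)/√2`. Integrality of `⟪x, √2(ε i - ε j)⟫` says that the coordinates of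
`√2 x` differ by integers; as they sum to `0` and `3` is squarefree, integrality of `⟪x, x⟫` then
forces them to be integers themselves. Reducing them modulo `2`, every `x ∈ L` is congruent modulo
`Λ2` to some `u i j`. Two nonzero such vectors that are not proportional have inner product `±1/2`,
so up to sign at most one of them lies in `L`; permutations of the coordinates preserve `Λ2` while
permuting the `u i j`.
-/

lemma exists_int_eq_of_sub_int_of_sum_sq_int {ι K : Type*} [Fintype ι] [Field K] [CharZero K]
    (hι : Squarefree (Fintype.card ι)) {w : ι → K} (hsum : ∑ i, w i = 0)
    (hsub : ∀ i j, ∃ m : ℤ, w i - w j = m) (hsq : ∃ k : ℤ, ∑ i, w i ^ 2 = k) (i : ι) :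
    ∃ m : ℤ, w i = m := by
  choose d hd using hsub i
  obtain ⟨k, hk⟩ := hsq
  have hcard : (Fintype.card ι : K) ≠ 0 := Nat.cast_ne_zero.2 hι.ne_zero
  have hw : Fintype.card ι * w i = ((∑ j, d j : ℤ) : K) := by
    simp [← hd, Finset.sum_sub_distrib, hsum]
  have hd_sq : ∑ j, (d j : K) ^ 2 = Fintype.card ι * w i ^ 2 + k := by
    simp only [← hd, sub_sq, Finset.sum_add_distrib, Finset.sum_sub_distrib, ← Finset.mul_sum,
      hsum, hk, Finset.sum_const, Finset.card_univ, nsmul_eq_mul]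
    ring
  have hsq_eq : (∑ j, d j) ^ 2 = (Fintype.card ι : ℤ) * (∑ j, d j ^ 2 - k) := by
    apply Int.cast_injective (α := K)
    push_cast at hw ⊢
    rw [← hw, hd_sq]
    ring
  obtain ⟨t, ht⟩ : (Fintype.card ι : ℤ) ∣ ∑ j, d j :=
    ((Int.squarefree_natCast.2 hι).dvd_pow_iff_dvd two_ne_zero).1 ⟨_, hsq_eq⟩
  refine ⟨t, mul_left_cancel₀ hcard ?_⟩
  rw [hw, ht, Int.cast_mul, Int.cast_natCast]

lemma inner_εv_right {n : ℕ} (x : E n) (i : Fin n) : ⟪x, εv i⟫ = x i := by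
  simp [εv, EuclideanSpace.inner_single_right]

lemma exists_eq_inv_sqrt_two_smul_intVec {n : ℕ} (hn : Squarefree n) {x : E n}
    (hsum : ∑ i, x i = 0) (hroot : ∀ i j, ∃ m : ℤ, ⟪x, √2 • (εv i - εv j)⟫ = m)
    (hnorm : ∃ k : ℤ, ⟪x, x⟫ = k) :
    ∃ y : Fin n → ℤ, ∑ i, y i = 0 ∧ x = (√2)⁻¹ • intVec y := by
  have hsum' : ∑ i, √2 * x i = 0 := by rw [← Finset.mul_sum, hsum, mul_zero]
  have hsub (i j) : ∃ m : ℤ, √2 * x i - √2 * x j = m := by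
    simpa only [real_inner_smul_right, inner_sub_right, inner_εv_right, mul_sub] using hroot i j
  have hsq : ∃ k : ℤ, ∑ i, (√2 * x i) ^ 2 = k := by
    obtain ⟨k, hk⟩ := hnorm
    refine ⟨2 * k, ?_⟩
    simp [← hk, mul_pow, ← Finset.mul_sum, EuclideanSpace.real_norm_sq_eq]
  choose y hy using
    exists_int_eq_of_sub_int_of_sum_sq_int ((Fintype.card_fin n).symm ▸ hn) hsum' hsub hsq
  refine ⟨y, ?_, ?_⟩
  · simp only [hy] at hsum'
    exact_mod_cast hsum'
  · ext i
    simp [intVec, ← hy]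

lemma intVec_sub {n : ℕ} (y z : Fin n → ℤ) : intVec (y - z) = intVec y - intVec z := by
  ext i
  simp [intVec]

/-- The vector `(ε i - ε j)/√2`, a root of the root system `A_{n-1}` scaled to norm `1`. The
degenerate value `rootVec i i = 0` is allowed, so that it represents the trivial class modulo
`Λ2`. -/
def rootVec {n : ℕ} (i j : Fin n) : E n := (√2)⁻¹ • (εv i - εv j)

@[simp]
lemma rootVec_self {n : ℕ} (i : Fin n) : rootVec i i = 0 := by
  simp [rootVec]

lemma neg_rootVec {n : ℕ} (i j : Fin n) : -rootVec i j = rootVec j i := by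
  rw [rootVec, rootVec, ← smul_neg, neg_sub]

/-- The integer coordinates of the root `ε i - ε j` of `A_{n-1}`. -/
def intRoot {n : ℕ} (i j : Fin n) : Fin n → ℤ := Pi.single i 1 - Pi.single j 1

lemma sum_intRoot {n : ℕ} (i j : Fin n) : ∑ k, intRoot i j k = 0 := by
  simp [intRoot]

lemma intVec_intRoot {n : ℕ} (i j : Fin n) : intVec (intRoot i j) = εv i - εv j := by
  ext k
  simp [intVec, intRoot, εv, Pi.single_apply]

lemma inner_rootVec {n : ℕ} (i j k l : Fin n) :
    ⟪rootVec i j, rootVec k l⟫ = ((intRoot i j k - intRoot i j l : ℤ) : ℝ) / 2 := by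
  have hinner : ⟪εv i - εv j, εv k - εv l⟫ = ((intRoot i j k - intRoot i j l : ℤ) : ℝ) := by
    rw [← intVec_intRoot i j, inner_sub_right, inner_εv_right, inner_εv_right]
    simp [intVec]
  rw [rootVec, rootVec, real_inner_smul_left, real_inner_smul_right, hinner, ← mul_assoc,
    ← mul_inv, Real.mul_self_sqrt zero_le_two, inv_mul_eq_div]

lemma sqrt_two_smul_intVec_mem_Λ2 {y : Fin 3 → ℤ} (hy : ∑ i, y i = 0) : √2 • intVec y ∈ Λ2 :=
  Submodule.subset_span ⟨y, by rwa [← Fin.sum_univ_three], rfl⟩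

lemma inv_sqrt_two_smul_intVec_mem_Λ2 {y : Fin 3 → ℤ} (hy : ∑ i, y i = 0)
    (heven : ∀ i, Even (y i)) : (√2)⁻¹ • intVec y ∈ Λ2 := by
  choose z hz using heven
  have hz_sum : ∑ i, z i = 0 := by
    simp only [hz, Finset.sum_add_distrib] at hy
    lia
  have hyz : intVec y = (2 : ℝ) • intVec z := by
    ext i
    simp [intVec, hz, two_mul]
  rw [hyz, smul_smul, inv_mul_eq_div, Real.div_sqrt]
  exact sqrt_two_smul_intVec_mem_Λ2 hz_sum

lemma exists_even_sub_intRoot {y : Fin 3 → ℤ} (hy : ∑ i, y i = 0) :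
    ∃ i j : Fin 3, ∀ k, Even ((y - intRoot i j) k) := by
  have hmod : ∀ v : Fin 3 → ZMod 2, ∑ i, v i = 0 →
      ∃ i j : Fin 3, ∀ k, v k = intRoot i j k := by decide
  obtain ⟨i, j, h⟩ := hmod (fun i ↦ y i) (by exact_mod_cast congrArg (Int.cast (R := ZMod 2)) hy)
  refine ⟨i, j, fun k ↦ ?_⟩
  rw [← ZMod.intCast_eq_zero_iff_even]
  simp [h]

lemma eq_or_eq_swap_of_inner_rootVec_int {i j k l : Fin 3} (hij : i ≠ j) (hkl : k ≠ l)
    (h : ∃ m : ℤ, ⟪rootVec i j, rootVec k l⟫ = m) : k = i ∧ l = j ∨ k = j ∧ l = i := by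
  obtain ⟨m, hm⟩ := h
  have heven : Even (intRoot i j k - intRoot i j l) := by
    rw [inner_rootVec, div_eq_iff two_ne_zero, mul_comm] at hm
    exact even_iff_exists_two_mul.2 ⟨m, by exact_mod_cast hm⟩
  clear hm
  decide +revert

lemma exists_sub_rootVec_mem_Λ2 {L : Submodule ℤ (E 3)} (hL : LatticeIsIntegral L)
    (hΛ : Λ2 ≤ L) (hV : ∀ x ∈ L, x 0 + x 1 + x 2 = 0) {x : E 3} (hx : x ∈ L) :
    ∃ i j, x - rootVec i j ∈ Λ2 := by
  have hroot (i j : Fin 3) : √2 • (εv i - εv j) ∈ L := by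
    rw [← intVec_intRoot]
    exact hΛ (sqrt_two_smul_intVec_mem_Λ2 (sum_intRoot i j))
  obtain ⟨y, hy, rfl⟩ := exists_eq_inv_sqrt_two_smul_intVec Nat.prime_three.prime.squarefree
    (by rw [Fin.sum_univ_three, hV x hx]) (fun i j ↦ hL x hx _ (hroot i j)) (hL x hx x hx)
  obtain ⟨i, j, heven⟩ := exists_even_sub_intRoot hy
  refine ⟨i, j, ?_⟩
  rw [rootVec, ← intVec_intRoot, ← smul_sub, ← intVec_sub]
  exact inv_sqrt_two_smul_intVec_mem_Λ2 (by simp [hy, sum_intRoot]) heven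

lemma eq_sup_span_rootVec {L : Submodule ℤ (E 3)} (hL : LatticeIsIntegral L) (hΛ : Λ2 ≤ L)
    (hV : ∀ x ∈ L, x 0 + x 1 + x 2 = 0) {i j : Fin 3} (hij : i ≠ j) (hmem : rootVec i j ∈ L) :
    L = Λ2 ⊔ Submodule.span ℤ {rootVec i j} := by
  refine le_antisymm (fun x hx ↦ ?_)
    (sup_le hΛ ((Submodule.span_singleton_le_iff_mem _ _).2 hmem))
  obtain ⟨k, l, hkl⟩ := exists_sub_rootVec_mem_Λ2 hL hΛ hV hx
  suffices hspan : rootVec k l ∈ Submodule.span ℤ {rootVec i j} from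
    Submodule.mem_sup.2 ⟨_, hkl, _, hspan, sub_add_cancel _ _⟩
  by_cases hne : k = l
  · simp [hne]
  have hkl_mem : rootVec k l ∈ L := (L.sub_mem_iff_right hx).1 (hΛ hkl)
  obtain ⟨rfl, rfl⟩ | ⟨rfl, rfl⟩ :=
    eq_or_eq_swap_of_inner_rootVec_int hij hne (hL _ hmem _ hkl_mem)
  · exact Submodule.mem_span_singleton_self _
  · rw [← neg_rootVec l k, Submodule.neg_mem_iff]
    exact Submodule.mem_span_singleton_self _

lemma IsometricLattices.refl {n : ℕ} (L : Submodule ℤ (E n)) : IsometricLattices L L :=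
  ⟨.refl ℝ (E n), by simp⟩

lemma IsometricLattices.of_map_eq {n : ℕ} {L M : Submodule ℤ (E n)} (g : E n ≃ₗᵢ[ℝ] E n)
    (h : L.map (g.toLinearEquiv.toLinearMap.restrictScalars ℤ) = M) : IsometricLattices L M :=
  ⟨g, congrArg SetLike.coe h⟩

/-- The linear isometry of `ℝ^n` permuting the coordinates so that `ε i` is sent to `ε (σ i)`. -/
def permIsometry {n : ℕ} (σ : Equiv.Perm (Fin n)) : E n ≃ₗᵢ[ℝ] E n :=
  LinearIsometryEquiv.piLpCongrLeft 2 ℝ ℝ σ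

lemma permIsometry_intVec {n : ℕ} (σ : Equiv.Perm (Fin n)) (y : Fin n → ℤ) :
    permIsometry σ (intVec y) = intVec (y ∘ σ.symm) := by
  ext i
  simp [permIsometry, intVec, Equiv.piCongrLeft'_apply]

lemma permIsometry_rootVec {n : ℕ} (σ : Equiv.Perm (Fin n)) (i j : Fin n) :
    permIsometry σ (rootVec i j) = rootVec (σ i) (σ j) := by
  simp [permIsometry, rootVec, εv]

lemma map_permIsometry_Λ2_le (σ : Equiv.Perm (Fin 3)) :
    Λ2.map ((permIsometry σ).toLinearEquiv.toLinearMap.restrictScalars ℤ) ≤ Λ2 := by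
  refine (Submodule.map_span_le _ _ _).2 ?_
  rintro _ ⟨y, hy, rfl⟩
  have hσy : ∑ i, (y ∘ σ.symm) i = 0 := by
    rw [← hy, ← Fin.sum_univ_three]
    exact Equiv.sum_comp σ.symm y
  simpa [permIsometry_intVec] using sqrt_two_smul_intVec_mem_Λ2 hσy

lemma map_permIsometry_Λ2 (σ : Equiv.Perm (Fin 3)) :
    Λ2.map ((permIsometry σ).toLinearEquiv.toLinearMap.restrictScalars ℤ) = Λ2 := by
  refine le_antisymm (map_permIsometry_Λ2_le σ) fun x hx ↦ ?_
  refine ⟨permIsometry σ.symm x, map_permIsometry_Λ2_le σ.symm ⟨x, hx, rfl⟩, ?_⟩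
  ext i
  simp [permIsometry]

lemma isometricLattices_sup_span_rootVec {i j k l : Fin 3} (hij : i ≠ j) (hkl : k ≠ l) :
    IsometricLattices (Λ2 ⊔ Submodule.span ℤ {rootVec i j})
      (Λ2 ⊔ Submodule.span ℤ {rootVec k l}) := by
  obtain ⟨σ, rfl, rfl⟩ : ∃ σ : Equiv.Perm (Fin 3), σ i = k ∧ σ j = l :=
    MulAction.is_two_pretransitive_iff.1 (Equiv.Perm.isMultiplyPretransitive (Fin 3) 2) hij hkl
  refine .of_map_eq (permIsometry σ) ?_
  rw [Submodule.map_sup, map_permIsometry_Λ2, Submodule.map_span, Set.image_singleton]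
  simp [permIsometry_rootVec]

/-- Every integral lattice `L` with `Λ₂ ⊆ L ⊆ V = {x : x 0 + x 1 + x 2 = 0}` is isometric
to `Λ₂` or to `Λ₂ + ℤ·(ε1-ε2)/√2`. -/
theorem integral_lattices_containing_Λ2 (L : Submodule ℤ (E 3))
    (hL : LatticeIsIntegral L) (hΛ : Λ2 ≤ L) (hV : ∀ x ∈ L, x 0 + x 1 + x 2 = 0) :
    IsometricLattices L Λ2 ∨ IsometricLattices L (Λ2 ⊔ Submodule.span ℤ {u12}) := by
  by_cases hle : L ≤ Λ2
  · rw [le_antisymm hle hΛ]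
    exact .inl (.refl Λ2)
  · obtain ⟨x, hxL, hxΛ⟩ := SetLike.not_le_iff_exists.1 hle
    obtain ⟨i, j, hx⟩ := exists_sub_rootVec_mem_Λ2 hL hΛ hV hxL
    have hij : i ≠ j := by
      rintro rfl
      exact hxΛ (by simpa using hx)
    rw [eq_sup_span_rootVec hL hΛ hV hij ((L.sub_mem_iff_right hxL).1 (hΛ hx))]
    exact .inr (isometricLattices_sup_span_rootVec hij Fin.zero_ne_one)
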